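/- Let W = F_{q^n} × F_{q^n} and let U be an F_q-subspace of W with dim_{F_q} U = n whose linear set L_U has maximum field of linearity F_q, i.e., for every divisor e of n with e > 1 there is no F_{q^e}-subspace U' of W with L_{U'} = L_U. Then the rank of L_U as an F_q-linear set is uniquely defined: every F_q-subspace V of W with L_V = L_U satisfies dim_{F_q} V = n. -/

import Mathlib

/-- The `F_q`-linear set of PG(1,q^n) defined by a set `S ⊆ F × F`: the set of
one-dimensional `F`-subspaces spanned by the nonzero vectors of `S`. -/
def linSet (F : Type) [Field F] (S : Set (F × F)) : Set (Submodule F (F × F)) :=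
  {X | ∃ u ∈ S, u ≠ 0 ∧ X = Submodule.span F {u}}

/-!
If `U` has rank `n` and avoids a point of the line, it is the graph of an additive map `f` of
`F = 𝔽_{q^n}`, and the number of directions of `f` depends only on `L_U`. If some `V` with
`L_V = L_U` had smaller rank, `f` would determine fewer than `q ^ (n - 1)` directions.

The Rédei polynomial `∏ a, (Y - (f a - a X))` of `f` differs from `Y ^ q ^ n - Y` by a
`q`-linearized polynomial in `Y`, whose coefficients `ρ g ∈ F[X]` can be indexed by the Galois
group of `F` over `𝔽_q`. The Rédei polynomial vanishes at `Y = f x - x X` for every `x`. By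
independence of automorphisms this makes `X ^ q ^ i * ρ g`, where `g` is `x ↦ x ^ q ^ i`, an
`F`-linear combination of the coefficients, up to a term `X - X ^ q ^ n` for `g = 1`. Hence
`q ^ n - deg (ρ g)` is a sum of distinct powers of `q` whenever `ρ g ≠ 0`, and the nonzero `ρ g`
have distinct degrees by uniqueness of such sums. So `{g | ρ g ≠ 0}` is stable under right
multiplication by the automorphisms occurring in `f`. With few directions the coefficient of
`Y ^ q ^ (n - 1)` vanishes, so these automorphisms generate a proper subgroup, over whose fixed
field `f` is linear.
-/

open Polynomial


section Frobenius
variable {K A : Type*} [Field K] [Fintype K] [CommRing A] [Algebra K A]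

theorem frobeniusAlgHom_pow_apply (i : ℕ) (x : A) :
    (FiniteField.frobeniusAlgHom K A ^ i) x = x ^ Fintype.card K ^ i := by
  rw [AlgHom.coe_pow, FiniteField.coe_frobeniusAlgHom, pow_iterate]

theorem prod_X_sub_C_univ (K : Type*) [Field K] [Fintype K] :
    ∏ a : K, (X - C a) = (X ^ Fintype.card K - X : K[X]) := by
  have hmonic : (X ^ Fintype.card K - X : K[X]).Monic :=
    monic_X_pow_sub (by rw [degree_X]; exact_mod_cast Fintype.one_lt_card)
  have hroots := FiniteField.roots_X_pow_card_sub_X K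
  have hcard : (X ^ Fintype.card K - X : K[X]).roots.card =
      (X ^ Fintype.card K - X : K[X]).natDegree := by
    rw [hroots, FiniteField.X_pow_card_sub_X_natDegree_eq K Fintype.one_lt_card]
    rfl
  simpa only [hroots, Finset.prod_map_val] using!
    prod_multiset_X_sub_C_of_monic_of_roots_card_eq hmonic hcard

theorem prod_sub_smul (h t : A) :
    ∏ a : K, (h - a • t) = h ^ Fintype.card K - t ^ (Fintype.card K - 1) * h := by
  have hprod := homogenize_finsetProd (s := Finset.univ) (p := fun a : K => X - C a)
    (n := fun _ => 1) fun a _ => (natDegree_X_sub_C a).le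
  rw [prod_X_sub_C_univ, Finset.sum_const, Finset.card_univ, smul_eq_mul, mul_one] at hprod
  have heval := congrArg (MvPolynomial.aeval ![h, t]) hprod
  simpa [homogenize_X_pow, homogenize_X, Fintype.card_ne_zero, Algebra.smul_def, mul_comm h,
    eq_comm] using heval

end Frobenius

section Linearized

/-- The `q`-linearized polynomials `∑ i, cᵢ X ^ q ^ i` over `B`. -/
noncomputable def linearizedPolynomials (q : ℕ) (B : Type*) [CommRing B] : Submodule B B[X] :=
  Submodule.span B (Set.range fun i : ℕ => X ^ q ^ i)

variable {B : Type*} [CommRing B] {p : B[X]}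

theorem X_pow_pow_mem_linearizedPolynomials (q i : ℕ) : X ^ q ^ i ∈ linearizedPolynomials q B :=
  Submodule.subset_span ⟨i, rfl⟩

theorem exists_pow_eq_of_mem_linearizedPolynomials {q : ℕ} (hp : p ∈ linearizedPolynomials q B)
    {m : ℕ} (hm : p.coeff m ≠ 0) : ∃ i, q ^ i = m := by
  induction hp using Submodule.span_induction with
  | mem x hx =>
    obtain ⟨i, rfl⟩ := hx
    by_contra! hne
    exact hm (by rw [coeff_X_pow, if_neg (hne i).symm])
  | zero => exact absurd (coeff_zero m) hm
  | add x y _ _ hx hy =>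
    by_cases hxm : x.coeff m = 0
    · exact hy (by simpa [hxm] using hm)
    · exact hx hxm
  | smul c x _ hx => exact hx (right_ne_zero_of_mul (by simpa using hm))

theorem eval_eq_sum_range_of_mem_linearizedPolynomials {q : ℕ} (hq : 1 < q)
    (hp : p ∈ linearizedPolynomials q B) {n : ℕ} (hdeg : p.natDegree < q ^ n) (z : B) :
    p.eval z = ∑ i ∈ Finset.range n, p.coeff (q ^ i) * z ^ q ^ i := by
  have hpow : StrictMono fun i => q ^ i := pow_right_strictMono₀ hq
  have hsupp : p.support ⊆ (Finset.range n).map ⟨_, hpow.injective⟩ := by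
    intro m hm
    obtain ⟨i, rfl⟩ := exists_pow_eq_of_mem_linearizedPolynomials hp (mem_support_iff.1 hm)
    have hi := (le_natDegree_of_mem_supp _ hm).trans_lt hdeg
    simpa [hq.ne'] using hpow.lt_iff_lt.1 hi
  rw [eval_eq_sum, sum_eq_of_subset (fun e a => a * z ^ e) (fun _ => zero_mul _) hsupp,
    Finset.sum_map]
  rfl

variable {K : Type*} [Field K] [Fintype K] [Algebra K B]

theorem pow_card_mem_linearizedPolynomials (hp : p ∈ linearizedPolynomials (Fintype.card K) B) :
    p ^ Fintype.card K ∈ linearizedPolynomials (Fintype.card K) B := by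
  induction hp using Submodule.span_induction with
  | mem x hx =>
    obtain ⟨i, rfl⟩ := hx
    rw [← pow_mul, ← pow_succ]
    exact X_pow_pow_mem_linearizedPolynomials _ (i + 1)
  | zero => simp [Fintype.card_ne_zero]
  | add x y _ _ hx hy =>
    rw [← FiniteField.frobeniusAlgHom_apply K B[X], map_add]
    exact add_mem hx hy
  | smul b x _ hx =>
    rw [_root_.smul_pow]
    exact Submodule.smul_mem _ _ hx

theorem comp_X_sub_C_smul_of_mem_linearizedPolynomials
    (hp : p ∈ linearizedPolynomials (Fintype.card K) B) (a : K) (b : B) :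
    p.comp (X - C (a • b)) = p - a • C (p.eval b) := by
  induction hp using Submodule.span_induction with
  | mem x hx =>
    obtain ⟨i, rfl⟩ := hx
    have := map_sub (FiniteField.frobeniusAlgHom K B[X] ^ i) X (a • C b)
    rw [map_smul] at this
    simpa only [frobeniusAlgHom_pow_apply, ← smul_C, X_pow_comp, eval_X_pow, C_pow] using this
  | zero => simp
  | add x y _ _ hx hy =>
    rw [add_comp, hx, hy, eval_add, C_add, smul_add]
    ring
  | smul c x _ hx =>
    rw [smul_comp, hx, eval_smul, smul_sub, smul_eq_mul, ← smul_eq_mul, ← smul_C, smul_comm]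

theorem prod_X_sub_C_sum_smul_mem_linearizedPolynomials : ∀ {r : ℕ} (b : Fin r → B),
    ∏ v : Fin r → K, (X - C (∑ i, v i • b i)) ∈
      linearizedPolynomials (Fintype.card K) B
  | 0, b => by simpa using X_pow_pow_mem_linearizedPolynomials (B := B) (Fintype.card K) 0
  | r + 1, b => by
    set P : B[X] := ∏ v : Fin r → K, (X - C (∑ i, v i • b i.succ)) with hP
    have hPmem : P ∈ linearizedPolynomials (Fintype.card K) B :=
      prod_X_sub_C_sum_smul_mem_linearizedPolynomials fun i => b i.succ
    have hshift (a : K) :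
        ∏ v : Fin r → K, (X - C (a • b 0 + ∑ i, v i • b i.succ)) = P - a • C (P.eval (b 0)) := by
      rw [← comp_X_sub_C_smul_of_mem_linearizedPolynomials hPmem, hP, prod_comp]
      simp only [sub_comp, X_comp, C_comp, C_add, sub_sub]
    have hprod : ∏ v : Fin (r + 1) → K, (X - C (∑ i, v i • b i)) =
        P ^ Fintype.card K - P.eval (b 0) ^ (Fintype.card K - 1) • P := by
      rw [smul_eq_C_mul, C_pow, ← prod_sub_smul, ← (Fin.consEquiv fun _ => K).prod_comp,
        Fintype.prod_prod_type]
      simp only [Fin.sum_univ_succ, Fin.consEquiv_apply, Fin.cons_zero, Fin.cons_succ, hshift]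
    rw [hprod]
    exact sub_mem (pow_card_mem_linearizedPolynomials hPmem) (Submodule.smul_mem _ _ hPmem)

theorem prod_X_sub_C_mem_linearizedPolynomials {V : Type*} [AddCommGroup V] [Module K V]
    [Fintype V] (φ : V →ₗ[K] B) :
    ∏ v, (X - C (φ v)) ∈ linearizedPolynomials (Fintype.card K) B := by
  let b := Module.finBasis K V
  rw [← b.equivFun.symm.toEquiv.prod_comp]
  simpa only [LinearEquiv.coe_toEquiv, b.equivFun_symm_apply, map_sum, map_smul] using
    prod_X_sub_C_sum_smul_mem_linearizedPolynomials fun i => φ (b i)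

end Linearized

section Degree

theorem exists_degree_eq_degree_sum {ι : Type*} [Fintype ι] {R : Type*} [Semiring R]
    (f : ι → R[X]) (hne : ∑ i, f i ≠ 0)
    (hinj : ∀ i j, (∑ k, f k).degree ≤ (f i).degree → (f i).degree = (f j).degree → i = j) :
    ∃ i, (f i).degree = (∑ k, f k).degree := by
  classical
  obtain ⟨j, -, hj⟩ := Finset.exists_max_image Finset.univ (fun i => (f i).degree)
    (Finset.nonempty_of_sum_ne_zero hne)
  have hle : (∑ k, f k).degree ≤ (f j).degree :=
    (degree_sum_le _ _).trans (Finset.sup_le hj)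
  refine ⟨j, ?_⟩
  have hlt : (∑ i ∈ Finset.univ.erase j, f i).degree < (f j).degree := by
    refine (degree_sum_le _ _).trans_lt ((Finset.sup_lt_iff ?_).2 fun i hi => ?_)
    · exact (bot_lt_iff_ne_bot.2 (degree_ne_bot.2 hne)).trans_le hle
    · exact lt_of_le_of_ne (hj i (Finset.mem_univ i)) fun h =>
        Finset.ne_of_mem_erase hi (hinj j i hle h.symm).symm
  rw [← Finset.add_sum_erase _ _ (Finset.mem_univ j), degree_add_eq_left_of_degree_lt hlt]

variable {F ι : Type*} [Field F]

/-- `S` is the set of indices met before `i` on a path along which `deg ρ` drops by `w` of the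
index reached at each step, starting from degree `N`. Thus `N - deg ρᵢ` is the subset sum of `w`
over `insert i S`, and the indices in `S` have larger degree than `i`. -/
def IsDegreeChain [DecidableEq ι] (ρ : ι → F[X]) (w : ι → ℕ) (N : ℕ) (i : ι) (S : Finset ι) :
    Prop :=
  (ρ i).natDegree + ∑ k ∈ insert i S, w k = N ∧ ∀ k ∈ S, (ρ i).natDegree < (ρ k).natDegree

variable {ρ : ι → F[X]} {w : ι → ℕ} {N : ℕ}

theorem IsDegreeChain.eq_of_natDegree_eq [DecidableEq ι] {i j : ι} {S T : Finset ι}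
    (hw : Function.Injective fun S : Finset ι => ∑ k ∈ S, w k)
    (hi : IsDegreeChain ρ w N i S) (hj : IsDegreeChain ρ w N j T)
    (hij : (ρ i).natDegree = (ρ j).natDegree) : i = j := by
  have hST : insert i S = insert j T := hw (by
    have := hi.1.trans hj.1.symm
    dsimp only
    omega)
  have hmem : i ∈ insert j T := hST ▸ Finset.mem_insert_self i S
  exact (Finset.mem_insert.1 hmem).resolve_right fun hiT => (hj.2 i hiT).ne hij.symm

theorem IsDegreeChain.cons [DecidableEq ι] {i j : ι} {T : Finset ι}
    (hj : IsDegreeChain ρ w N j T) (hij : (ρ j).natDegree = (ρ i).natDegree + w i) (hwi : 0 < w i) :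
    IsDegreeChain ρ w N i (insert j T) := by
  have hlt : ∀ k ∈ insert j T, (ρ i).natDegree < (ρ k).natDegree := by
    intro k hk
    obtain rfl | hkT := Finset.mem_insert.1 hk
    · omega
    · have := hj.2 k hkT
      omega
  refine ⟨?_, hlt⟩
  rw [Finset.sum_insert fun hi => (hlt i hi).false, ← add_assoc, ← hij, hj.1]

theorem exists_isDegreeChain [Finite ι] [DecidableEq ι]
    (hw : Function.Injective fun S : Finset ι => ∑ k ∈ S, w k) {i₀ : ι}
    (h₀ : (ρ i₀).natDegree + w i₀ = N)
    (hspan : ∀ i, i ≠ i₀ → X ^ w i * ρ i ∈ Submodule.span F (Set.range ρ)) (i : ι)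
    (hi : ρ i ≠ 0) : ∃ S, IsDegreeChain ρ w N i S := by
  cases nonempty_fintype ι
  induction i using (Finite.wellFounded_of_trans_of_irrefl
    fun j i : ι => (ρ i).natDegree < (ρ j).natDegree).induction with | _ i ih
  by_cases hii₀ : i = i₀
  · subst hii₀
    exact ⟨∅, by simpa using h₀, by simp⟩
  have hwi : 0 < w i := Nat.pos_of_ne_zero fun h =>
    Finset.singleton_ne_empty i (hw (by simpa using h))
  obtain ⟨c, hc⟩ := (Submodule.mem_span_range_iff_exists_fun F).1 (hspan i hii₀)
  have hne : X ^ w i * ρ i ≠ 0 := mul_ne_zero (pow_ne_zero _ X_ne_zero) hi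
  have hdeg : (X ^ w i * ρ i).natDegree = (ρ i).natDegree + w i := by
    rw [natDegree_mul (pow_ne_zero _ X_ne_zero) hi, natDegree_X_pow, add_comm]
  have hchain : ∀ j, (X ^ w i * ρ i).degree ≤ (c j • ρ j).degree →
      (c j • ρ j).natDegree = (ρ j).natDegree ∧ ∃ S, IsDegreeChain ρ w N j S := by
    intro j hj
    have hcj : c j • ρ j ≠ 0 := fun h => hne (degree_eq_bot.1 (by simpa [h] using hj))
    have hcj' := smul_ne_zero_iff.1 hcj
    have hsmul : (c j • ρ j).natDegree = (ρ j).natDegree := natDegree_smul _ hcj'.1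
    have := natDegree_le_natDegree hj
    exact ⟨hsmul, ih j (by omega) hcj'.2⟩
  obtain ⟨j, hj⟩ := exists_degree_eq_degree_sum (fun j => c j • ρ j) (hc ▸ hne) (by
    intro j k hj hjk
    rw [hc] at hj
    obtain ⟨hjd, S, hS⟩ := hchain j hj
    obtain ⟨hkd, T, hT⟩ := hchain k (hj.trans_eq hjk)
    exact hS.eq_of_natDegree_eq hw hT (hjd ▸ hkd ▸ natDegree_eq_of_degree_eq hjk))
  rw [hc] at hj
  obtain ⟨hjd, T, hT⟩ := hchain j hj.ge
  exact ⟨insert j T, hT.cons (hjd ▸ hdeg ▸ natDegree_eq_of_degree_eq hj) hwi⟩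

theorem smul_eq_zero_of_sum_smul_eq_zero [Fintype ι]
    (hw : Function.Injective fun S : Finset ι => ∑ k ∈ S, w k) {i₀ : ι}
    (h₀ : (ρ i₀).natDegree + w i₀ = N)
    (hspan : ∀ i, i ≠ i₀ → X ^ w i * ρ i ∈ Submodule.span F (Set.range ρ)) {c : ι → F}
    (hc : ∑ i, c i • ρ i = 0) (i : ι) : c i • ρ i = 0 := by
  classical
  have hdegree : ∀ j, c j • ρ j ≠ 0 →
      (c j • ρ j).natDegree = (ρ j).natDegree ∧ ∃ S, IsDegreeChain ρ w N j S := by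
    intro j hj
    have hj' := smul_ne_zero_iff.1 hj
    exact ⟨natDegree_smul _ hj'.1, exists_isDegreeChain hw h₀ hspan j hj'.2⟩
  have hdisj := degree_sum_eq_of_disjoint (fun j => c j • ρ j) Finset.univ (by
    rintro j ⟨-, hj⟩ k ⟨-, hk⟩ hjk hdeg
    obtain ⟨hjd, S, hS⟩ := hdegree j hj
    obtain ⟨hkd, T, hT⟩ := hdegree k hk
    exact hjk (hS.eq_of_natDegree_eq hw hT (hjd ▸ hkd ▸ natDegree_eq_of_degree_eq hdeg)))
  rw [hc, degree_zero, eq_comm, Finset.sup_eq_bot_iff] at hdisj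
  exact degree_eq_bot.1 (hdisj i (Finset.mem_univ i))

end Degree

section Galois
variable {K F : Type*} [Field K] [Field F] [Algebra K F] [FiniteDimensional K F]

theorem linearIndependent_galois_toLinearMap :
    LinearIndependent F fun g : Gal(F/K) => (g : F →ₐ[K] F).toLinearMap :=
  (linearIndependent_toLinearMap K F F).comp _
    (Algebra.IsAlgebraic.algEquivEquivAlgHom K F).injective

theorem exists_eq_sum_mul_galois [IsGalois K F] (f : F →ₗ[K] F) :
    ∃ a : Gal(F/K) → F, ∀ x, f x = ∑ g, a g * g x := by
  have hspan := linearIndependent_galois_toLinearMap (K := K) (F := F)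
    |>.span_eq_top_of_card_eq_finrank <| by
      rw [Module.finrank_linearMap_self, ← Nat.card_eq_fintype_card, IsGalois.card_aut_eq_finrank]
  obtain ⟨a, ha⟩ := (Submodule.mem_span_range_iff_exists_fun F).1
    (hspan.symm ▸ Submodule.mem_top : f ∈ _)
  exact ⟨a, fun x => by simp [← ha]⟩

theorem galois_apply_eq_sum_mul_galois {f : F → F} {a : Gal(F/K) → F}
    (ha : ∀ x, f x = ∑ g, a g * g x) (g : Gal(F/K)) (x : F) :
    g (f x) = ∑ k, g (a (g⁻¹ * k)) * k x := by
  rw [ha, map_sum, ← Equiv.sum_comp (Equiv.mulLeft g) fun k => g (a (g⁻¹ * k)) * k x]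
  simp

theorem eq_zero_of_forall_sum_C_mul_eq_zero {c : Gal(F/K) → F[X]}
    (h : ∀ x, ∑ g, C (g x) * c g = 0) (g : Gal(F/K)) : c g = 0 := by
  ext m
  have hindep := linearIndependent_galois_toLinearMap (K := K) (F := F)
  refine Fintype.linearIndependent_iff.1 hindep (fun g => (c g).coeff m)
    (LinearMap.ext fun x => ?_) g
  simpa [finsetSum_coeff, mul_comm] using congrArg (coeff · m) (h x)

theorem closure_subset_of_mul_mem {G : Type*} [Group G] [Finite G] {Z J : Set G} (hone : 1 ∈ Z)
    (hmul : ∀ z ∈ Z, ∀ j ∈ J, z * j ∈ Z) : (Subgroup.closure J : Set G) ⊆ Z := by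
  intro g hg
  rw [SetLike.mem_coe, ← Subgroup.mem_toSubmonoid, Subgroup.closure_toSubmonoid_of_finite] at hg
  induction hg using Submonoid.closure_induction_right with
  | one => exact hone
  | mul_right x _ y hy hx => exact hmul x hx y hy

end Galois

section Weight
variable (K F : Type*) [Field K] [Fintype K] [Field F] [Finite F] [Algebra K F]

/-- The exponent `i < [F : K]` for which `g` is the `i`-th power of the Frobenius automorphism over
`K`, as a bijection from the Galois group. -/
noncomputable def galoisEquivFin : Gal(F/K) ≃ Fin (Module.finrank K F) :=
  (Equiv.ofBijective _ (FiniteField.bijective_frobeniusAlgEquivOfAlgebraic_pow K F)).symm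

variable {K F}

/-- The power `q ^ i` of `q = |K|` with `i < [F : K]` such that `g x = x ^ q ^ i`. -/
noncomputable def galoisWeight (g : Gal(F/K)) : ℕ := Fintype.card K ^ (galoisEquivFin K F g : ℕ)

theorem galois_apply_eq_pow_galoisWeight (g : Gal(F/K)) (x : F) : g x = x ^ galoisWeight g := by
  have hg : FiniteField.frobeniusAlgEquivOfAlgebraic K F ^ (galoisEquivFin K F g : ℕ) = g :=
    (galoisEquivFin K F).symm_apply_apply g
  conv_lhs => rw [← hg, AlgEquiv.coe_pow, FiniteField.coe_frobeniusAlgEquivOfAlgebraic_iterate]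
  rfl

theorem C_sub_C_mul_X_pow_galoisWeight (g : Gal(F/K)) (x y : F) :
    (C y - C x * X) ^ galoisWeight g = C (g y) - C (g x) * X ^ galoisWeight g := by
  have hsub : (C y - C x * X) ^ galoisWeight g =
      C y ^ galoisWeight g - (C x * X) ^ galoisWeight g := by
    simpa only [frobeniusAlgHom_pow_apply] using!
      map_sub (FiniteField.frobeniusAlgHom K F[X] ^ (galoisEquivFin K F g : ℕ)) (C y) (C x * X)
  rw [hsub, mul_pow, ← C_pow, ← C_pow, galois_apply_eq_pow_galoisWeight,
    galois_apply_eq_pow_galoisWeight]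

theorem galoisWeight_frobenius_pow {i : ℕ} (hi : i < Module.finrank K F) :
    galoisWeight (FiniteField.frobeniusAlgEquivOfAlgebraic K F ^ i) = Fintype.card K ^ i :=
  congrArg (fun j : Fin _ => Fintype.card K ^ (j : ℕ)) <|
    Equiv.ofBijective_symm_apply_apply _
      (FiniteField.bijective_frobeniusAlgEquivOfAlgebraic_pow K F) ⟨i, hi⟩

theorem galoisWeight_pos (g : Gal(F/K)) : 0 < galoisWeight g := Nat.pow_pos Fintype.card_pos

theorem galoisWeight_one : galoisWeight (1 : Gal(F/K)) = 1 := by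
  simpa using galoisWeight_frobenius_pow (K := K) (F := F) (i := 0) Module.finrank_pos

theorem exists_galoisWeight_eq_pow_finrank_sub_one :
    ∃ g : Gal(F/K), galoisWeight g = Fintype.card K ^ (Module.finrank K F - 1) :=
  ⟨_, galoisWeight_frobenius_pow (Nat.sub_one_lt Module.finrank_pos.ne')⟩

theorem sum_galoisWeight_injective :
    Function.Injective fun S : Finset Gal(F/K) => ∑ g ∈ S, galoisWeight g := by
  let e : Gal(F/K) ↪ ℕ := (galoisEquivFin K F).toEmbedding.trans Fin.valEmbedding
  intro S T hST
  have hmap : ∑ i ∈ S.map e, Fintype.card K ^ i = ∑ i ∈ T.map e, Fintype.card K ^ i := by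
    simpa only [Finset.sum_map] using! hST
  exact Finset.map_injective e (Finset.geomSum_injective Fintype.one_lt_card hmap)

theorem sum_range_pow_card_eq_sum_galoisWeight {M : Type*} [AddCommMonoid M] (u : ℕ → M) :
    ∑ i ∈ Finset.range (Module.finrank K F), u (Fintype.card K ^ i) =
      ∑ g : Gal(F/K), u (galoisWeight g) := by
  rw [← Fin.sum_univ_eq_sum_range fun i => u (Fintype.card K ^ i),
    ← (galoisEquivFin K F).sum_comp]
  rfl

end Weight

section Redei

theorem natDegree_coeff_prod_X_sub_C_le {R ι : Type*} [CommRing R] [Nontrivial R] (s : Finset ι)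
    (φ : ι → R[X]) (hφ : ∀ i ∈ s, (φ i).natDegree ≤ 1) (j : ℕ) :
    ((∏ i ∈ s, (X - C (φ i))).coeff j).natDegree ≤ s.card - j := by
  obtain hj | hj := lt_or_ge s.card j
  · rw [coeff_eq_zero_of_natDegree_lt (by rwa [natDegree_finsetProd_X_sub_C_eq_card])]
    simp
  have hcoeff := Multiset.prod_X_sub_C_coeff (s.val.map φ) (k := j) (by simpa using hj)
  rw [Multiset.map_map, Finset.esymm_map_val, Multiset.card_map, Finset.card_val] at hcoeff
  change (∏ i ∈ s, (X - C (φ i))).coeff j = _ at hcoeff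
  rw [hcoeff, ← C_1, ← C_neg, ← C_pow]
  refine (natDegree_C_mul_le _ _).trans (natDegree_sum_le_of_forall_le _ _ fun t ht => ?_)
  obtain ⟨hts, htcard⟩ := Finset.mem_powersetCard.1 ht
  calc (∏ i ∈ t, φ i).natDegree ≤ ∑ i ∈ t, (φ i).natDegree := natDegree_prod_le _ _
    _ ≤ ∑ i ∈ t, 1 := Finset.sum_le_sum fun i hi => hφ i (hts hi)
    _ = s.card - j := by rw [Finset.sum_const, htcard, smul_eq_mul, mul_one]

variable {F : Type*} [Field F]

/-- The directions determined by a map `f`: the slopes of the lines through the origin and another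
point of its graph. For additive `f` these are the slopes of all secants. -/
def directions (f : F → F) : Set F := {y | ∃ a, a ≠ 0 ∧ f a = y * a}

variable [Fintype F]

/-- The Rédei polynomial `∏ a, (Y - (f a - a X))` of the graph of `f`, where `Y` is the outer
variable and `X`, the variable of the coefficients, stands for a slope. -/
noncomputable def redei (f : F → F) : F[X][X] := ∏ a : F, (X - C (C (f a) - C a * X))

/-- The deviation of the Rédei polynomial from `Y ^ |F| - Y`, to which it specializes when `X` is a
slope outside `directions f`. -/
noncomputable def redeiDefect (f : F → F) : F[X][X] := redei f - (X ^ Fintype.card F - X)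

theorem natDegree_redeiDefect_lt (f : F → F) : (redeiDefect f).natDegree < Fintype.card F := by
  have hredei : IsMonicOfDegree (redei f) (Fintype.card F) :=
    ⟨natDegree_finsetProd_X_sub_C_eq_card _ _, monic_prod_X_sub_C _ _⟩
  have hfrob : IsMonicOfDegree (X ^ Fintype.card F - X : F[X][X]) (Fintype.card F) :=
    (isMonicOfDegree_X_pow _ _).sub (natDegree_X.trans_lt Fintype.one_lt_card)
  exact hredei.natDegree_sub_lt Fintype.card_ne_zero hfrob

theorem natDegree_coeff_redeiDefect_le (f : F → F) (j : ℕ) :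
    ((redeiDefect f).coeff j).natDegree ≤ Fintype.card F - j := by
  have hlin (a : F) : (C (f a) - C a * X).natDegree ≤ 1 := by compute_degree
  rw [redeiDefect, coeff_sub]
  refine (natDegree_sub_le _ _).trans (max_le ?_ ?_)
  · exact natDegree_coeff_prod_X_sub_C_le Finset.univ _ (fun a _ => hlin a) j
  · simp only [coeff_sub, coeff_X_pow, coeff_X]
    split_ifs <;> simp

theorem eval_redeiDefect (f : F → F) (x : F) :
    (redeiDefect f).eval (C (f x) - C x * X) = C x * (X ^ Fintype.card F - X) := by
  have hroot : (redei f).eval (C (f x) - C x * X) = 0 := by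
    rw [redei, eval_prod]
    exact Finset.prod_eq_zero (Finset.mem_univ x) (by simp)
  have hpow : (C (f x) - C x * X) ^ Fintype.card F = C (f x) - C x * X ^ Fintype.card F := by
    rw [← FiniteField.frobeniusAlgHom_apply F F[X], map_sub]
    simp only [FiniteField.frobeniusAlgHom_apply, mul_pow, ← C_pow, FiniteField.pow_card]
  rw [redeiDefect, eval_sub, hroot, eval_sub, eval_X_pow, hpow, eval_X]
  ring

theorem eval_coeff_redeiDefect_eq_zero (f : F →+ F) {y : F} (hy : y ∉ directions f) (j : ℕ) :
    ((redeiDefect f).coeff j).eval y = 0 := by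
  have hbij : Function.Bijective fun a => f a - a * y := by
    refine Finite.injective_iff_bijective.1 fun u v huv => ?_
    by_contra hne
    refine hy ⟨u - v, sub_ne_zero.2 hne, ?_⟩
    rw [map_sub]
    linear_combination huv
  have hmap : (redeiDefect f).map (evalRingHom y) = 0 := by
    have hprod := hbij.prod_comp fun z => X - C z
    rw [prod_X_sub_C_univ] at hprod
    simp [redeiDefect, redei, Polynomial.map_prod, ← hprod]
  rw [← coe_evalRingHom, ← coeff_map, hmap, coeff_zero]

theorem coeff_redeiDefect_eq_zero (f : F →+ F) {j : ℕ} (hj : (directions f).ncard < j)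
    (hjF : j ≤ Fintype.card F) : (redeiDefect f).coeff j = 0 := by
  classical
  refine eq_zero_of_natDegree_lt_card_of_eval_eq_zero' _ (directions f)ᶜ.toFinset
    (fun y hy => eval_coeff_redeiDefect_eq_zero f (by simpa using hy) j) ?_
  have hdeg := natDegree_coeff_redeiDefect_le f j
  have hcompl := Set.ncard_add_ncard_compl (directions f)
  rw [Nat.card_eq_fintype_card] at hcompl
  rw [← Set.ncard_eq_toFinset_card']
  omega

end Redei

section System
variable {K F : Type*} [Field K] [Fintype K] [Field F] [Fintype F] [Algebra K F]

theorem redeiDefect_mem_linearizedPolynomials (f : F →ₗ[K] F) :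
    redeiDefect f ∈ linearizedPolynomials (Fintype.card K) F[X] := by
  let φ : F →ₗ[K] F[X] := ((monomial 0).restrictScalars K).comp f - (monomial 1).restrictScalars K
  have hφ (a : F) : φ a = C (f a) - C a * X := by simp [φ, C_mul_X_eq_monomial]
  have hredei := prod_X_sub_C_mem_linearizedPolynomials φ
  simp only [hφ] at hredei
  have hX := X_pow_pow_mem_linearizedPolynomials (B := F[X]) (Fintype.card K)
  refine sub_mem hredei (sub_mem ?_ ?_)
  · rw [Module.card_eq_pow_finrank (K := K) (V := F)]
    exact hX _
  · simpa using hX 0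

/-- The coefficient of `Y ^ galoisWeight g` in the defect. For linear `f` these are all the
coefficients that can be nonzero. -/
noncomputable def redeiCoeff (f : F → F) (g : Gal(F/K)) : F[X] :=
  (redeiDefect f).coeff (galoisWeight g)

theorem eval_redeiDefect_eq_sum_redeiCoeff (f : F →ₗ[K] F) (z : F[X]) :
    (redeiDefect f).eval z = ∑ g : Gal(F/K), redeiCoeff f g * z ^ galoisWeight g := by
  rw [eval_eq_sum_range_of_mem_linearizedPolynomials Fintype.one_lt_card
    (redeiDefect_mem_linearizedPolynomials f)
    (Module.card_eq_pow_finrank (K := K) (V := F) ▸ natDegree_redeiDefect_lt f)]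
  exact sum_range_pow_card_eq_sum_galoisWeight fun m => (redeiDefect f).coeff m * z ^ m

theorem degree_redeiCoeff_lt (f : F → F) (g : Gal(F/K)) :
    (redeiCoeff f g).degree < Fintype.card F := by
  have hcoeff := natDegree_coeff_redeiDefect_le f (galoisWeight g)
  have hlt : (redeiCoeff f g).natDegree < Fintype.card F :=
    hcoeff.trans_lt (Nat.sub_lt Fintype.card_pos (galoisWeight_pos g))
  exact degree_le_natDegree.trans_lt (by exact_mod_cast hlt)

variable {f : F →ₗ[K] F} {a : Gal(F/K) → F} (ha : ∀ x, f x = ∑ g, a g * g x)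
include ha

theorem X_pow_galoisWeight_mul_redeiCoeff [DecidableEq Gal(F/K)] (k : Gal(F/K)) :
    X ^ galoisWeight k * redeiCoeff f k =
      ∑ g : Gal(F/K), g (a (g⁻¹ * k)) • redeiCoeff f g +
        if k = 1 then X - X ^ Fintype.card F else 0 := by
  have hsum (x : F) : ∑ k : Gal(F/K), C (k x) *
      (∑ g : Gal(F/K), g (a (g⁻¹ * k)) • redeiCoeff f g +
        (if k = 1 then X - X ^ Fintype.card F else 0) -
        X ^ galoisWeight k * redeiCoeff f k) = 0 := by
    have hconst : ∑ g : Gal(F/K), redeiCoeff f g * C (g (f x)) =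
        ∑ k : Gal(F/K), C (k x) * ∑ g : Gal(F/K), g (a (g⁻¹ * k)) • redeiCoeff f g := by
      simp only [galois_apply_eq_sum_mul_galois ha, map_sum, Finset.mul_sum, C_mul, smul_eq_C_mul]
      rw [Finset.sum_comm]
      exact Finset.sum_congr rfl fun k _ => Finset.sum_congr rfl fun g _ => by ring
    have hlead : ∑ g : Gal(F/K), redeiCoeff f g * (C (g x) * X ^ galoisWeight g) =
        ∑ k : Gal(F/K), C (k x) * (X ^ galoisWeight k * redeiCoeff f k) :=
      Finset.sum_congr rfl fun g _ => by ring
    have heval := eval_redeiDefect f x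
    simp only [eval_redeiDefect_eq_sum_redeiCoeff, C_sub_C_mul_X_pow_galoisWeight, mul_sub,
      Finset.sum_sub_distrib, hconst, hlead] at heval
    simp only [mul_sub, mul_add, Finset.sum_add_distrib, Finset.sum_sub_distrib, mul_ite, mul_zero,
      Finset.sum_ite_eq', Finset.mem_univ, if_true, AlgEquiv.one_apply]
    linear_combination heval
  exact (sub_eq_zero.1 (eq_zero_of_forall_sum_C_mul_eq_zero hsum k)).symm

theorem X_pow_galoisWeight_mul_redeiCoeff_of_ne_one {k : Gal(F/K)} (hk : k ≠ 1) :
    X ^ galoisWeight k * redeiCoeff f k = ∑ g : Gal(F/K), g (a (g⁻¹ * k)) • redeiCoeff f g := by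
  classical
  simpa only [if_neg hk, add_zero] using X_pow_galoisWeight_mul_redeiCoeff ha k

theorem natDegree_redeiCoeff_one_add_galoisWeight_one :
    (redeiCoeff f (1 : Gal(F/K))).natDegree + galoisWeight (1 : Gal(F/K)) = Fintype.card F := by
  classical
  have hsum : (∑ g : Gal(F/K), g (a (g⁻¹ * 1)) • redeiCoeff f g).degree < Fintype.card F :=
    (degree_sum_le _ _).trans_lt <| (Finset.sup_lt_iff (WithBot.bot_lt_coe _)).2 fun g _ =>
      (degree_smul_le _ _).trans_lt (degree_redeiCoeff_lt f g)
  have hfrob : (X - X ^ Fintype.card F : F[X]).degree = Fintype.card F := by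
    rw [degree_sub_eq_right_of_degree_lt, degree_X_pow]
    rw [degree_X_pow, degree_X]
    exact_mod_cast Fintype.one_lt_card
  have hdeg := congrArg degree (X_pow_galoisWeight_mul_redeiCoeff ha 1)
  rw [if_pos rfl, degree_add_eq_right_of_degree_lt (hfrob ▸ hsum), hfrob] at hdeg
  have hne : redeiCoeff f (1 : Gal(F/K)) ≠ 0 := by
    rintro hzero
    simp [hzero] at hdeg
  rw [← natDegree_X_pow_mul _ hne, natDegree_eq_of_degree_eq_some hdeg]

theorem redeiCoeff_one_ne_zero : redeiCoeff f (1 : Gal(F/K)) ≠ 0 := by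
  intro h
  have hdeg := natDegree_redeiCoeff_one_add_galoisWeight_one ha
  rw [h, natDegree_zero, galoisWeight_one, zero_add] at hdeg
  exact Fintype.one_lt_card.ne hdeg

theorem redeiCoeff_mul_ne_zero {g h : Gal(F/K)} (hg : redeiCoeff f g ≠ 0) (hh : a h ≠ 0) :
    redeiCoeff f (g * h) ≠ 0 := by
  intro hgh
  have hne : g * h ≠ 1 := fun h1 => redeiCoeff_one_ne_zero ha (h1 ▸ hgh)
  have hspan (k : Gal(F/K)) (hk : k ≠ 1) : X ^ galoisWeight k * redeiCoeff f k ∈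
      Submodule.span F (Set.range (redeiCoeff (K := K) f)) := by
    rw [X_pow_galoisWeight_mul_redeiCoeff_of_ne_one ha hk]
    exact sum_mem fun i _ => Submodule.smul_mem _ _ (Submodule.subset_span ⟨i, rfl⟩)
  have hrel := X_pow_galoisWeight_mul_redeiCoeff_of_ne_one ha hne
  rw [hgh, mul_zero] at hrel
  have hterm := smul_eq_zero_of_sum_smul_eq_zero sum_galoisWeight_injective
    (natDegree_redeiCoeff_one_add_galoisWeight_one ha) hspan hrel.symm g
  rw [inv_mul_cancel_left, smul_eq_zero, map_eq_zero] at hterm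
  exact hterm.elim hh hg

end System

section Directions
variable {K F : Type*} [Field K] [Field F] [Finite F] [Algebra K F]

theorem exists_intermediateField_ne_bot_of_ncard_directions_lt (f : F →ₗ[K] F)
    (hD : (directions f).ncard < Nat.card K ^ (Module.finrank K F - 1)) :
    ∃ E : IntermediateField K F, E ≠ ⊥ ∧ ∀ l ∈ E, ∀ x, f (l * x) = l * f x := by
  have := Finite.of_injective (algebraMap K F) (algebraMap K F).injective
  have := Fintype.ofFinite K
  have := Fintype.ofFinite F
  obtain ⟨a, ha⟩ := exists_eq_sum_mul_galois f
  let H : Subgroup Gal(F/K) := Subgroup.closure {g | a g ≠ 0}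
  have hH : ∀ g ∈ H, redeiCoeff f g ≠ 0 :=
    closure_subset_of_mul_mem (redeiCoeff_one_ne_zero ha) fun _ hg _ hh =>
      redeiCoeff_mul_ne_zero ha hg hh
  obtain ⟨k, hk⟩ := exists_galoisWeight_eq_pow_finrank_sub_one (K := K) (F := F)
  have hzero : redeiCoeff f k = 0 := by
    rw [redeiCoeff, hk]
    refine coeff_redeiDefect_eq_zero (f : F →+ F) (Nat.card_eq_fintype_card (α := K) ▸ hD) ?_
    rw [Module.card_eq_pow_finrank (K := K) (V := F)]
    exact Nat.pow_le_pow_right Fintype.card_pos (Nat.sub_le _ _)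
  refine ⟨IntermediateField.fixedField H, fun hbot => ?_, fun l hl x => ?_⟩
  · have htop : H = ⊤ := by
      rw [← IntermediateField.fixingSubgroup_fixedField H, hbot,
        IntermediateField.fixingSubgroup_bot]
    exact hH k (htop ▸ Subgroup.mem_top k) hzero
  · have hfix (g : Gal(F/K)) : a g * g (l * x) = l * (a g * g x) := by
      by_cases hg : a g = 0
      · simp [hg]
      · rw [map_mul, (IntermediateField.mem_fixedField_iff H l).1 hl g (Subgroup.subset_closure hg),
          mul_left_comm]
    simp only [ha, hfix, Finset.mul_sum]

end Directions

section LinearSet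
variable {F : Type} [Field F] {S T : Set (F × F)}

theorem exists_smul_mem_of_linSet_eq (h : linSet F S = linSet F T) {u : F × F} (hu : u ∈ S)
    (hu0 : u ≠ 0) : ∃ c : F, c ≠ 0 ∧ c • u ∈ T := by
  obtain ⟨v, hv, -, huv⟩ : Submodule.span F {u} ∈ linSet F T := h ▸ ⟨u, hu, hu0, rfl⟩
  obtain ⟨c, rfl⟩ := Submodule.span_singleton_eq_span_singleton.1 huv
  exact ⟨c, c.ne_zero, hv⟩

theorem image_diff_zero_subset_of_linSet_eq {α : Type*} (h : linSet F S = linSet F T)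
    {φ : F × F → α} (hφ : ∀ c : F, c ≠ 0 → ∀ u, φ (c • u) = φ u) :
    φ '' (S \ {0}) ⊆ φ '' (T \ {0}) := by
  rintro _ ⟨u, ⟨hu, hu0⟩, rfl⟩
  obtain ⟨c, hc, hcu⟩ := exists_smul_mem_of_linSet_eq h hu hu0
  exact ⟨c • u, ⟨hcu, smul_ne_zero hc hu0⟩, hφ c hc u⟩

/-- The linear form whose kernel is the point `⟨(1, y)⟩` of the projective line. -/
def lineForm (y : F) : F × F →ₗ[F] F := LinearMap.snd F F F - y • LinearMap.fst F F F

theorem lineForm_apply (y : F) (u : F × F) : lineForm y u = u.2 - y * u.1 := rfl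

theorem forall_lineForm_ne_zero_of_linSet_eq (h : linSet F S = linSet F T) {y : F}
    (hy : ∀ u ∈ T, u ≠ 0 → lineForm y u ≠ 0) : ∀ u ∈ S, u ≠ 0 → lineForm y u ≠ 0 := by
  intro u hu hu0 hline
  obtain ⟨c, hc, hcu⟩ := exists_smul_mem_of_linSet_eq h hu hu0
  exact hy _ hcu (smul_ne_zero hc hu0) (by rw [map_smul, hline, smul_zero])

theorem exists_forall_lineForm_ne_zero [Finite F] (h0 : 0 ∈ S) (hS : S.ncard ≤ Nat.card F) :
    ∃ y, ∀ u ∈ S, u ≠ 0 → lineForm y u ≠ 0 := by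
  have hlt : ((fun u : F × F => u.2 / u.1) '' (S \ {0})).ncard < Nat.card F :=
    (Set.ncard_image_le (Set.toFinite _)).trans_lt
      ((Set.ncard_sdiff_singleton_lt_of_mem h0).trans_le hS)
  obtain ⟨y, hy⟩ : ∃ y, y ∉ (fun u : F × F => u.2 / u.1) '' (S \ {0}) := by
    by_contra! hall
    rw [Set.eq_univ_of_forall hall, Set.ncard_univ] at hlt
    exact hlt.false
  refine ⟨y, fun u hu hu0 hline => hy ⟨u, ⟨hu, hu0⟩, ?_⟩⟩
  rw [lineForm_apply, sub_eq_zero] at hline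
  have hfst : u.1 ≠ 0 := fun hfst => hu0 (Prod.ext hfst (by simp [hline, hfst]))
  exact (div_eq_iff hfst).2 hline

variable {K : Type*} [Field K] [Algebra K F] {U : Submodule K (F × F)} {y : F}

theorem injective_lineForm_domRestrict (hy : ∀ u ∈ U, u ≠ 0 → lineForm y u ≠ 0) :
    Function.Injective (((lineForm y).restrictScalars K).domRestrict U) :=
  (injective_iff_map_eq_zero _).2 fun u hu => by
    by_contra hne
    exact hy u u.2 (by simpa using hne) hu

theorem exists_linearMap_forall_mem_iff [FiniteDimensional K F]
    (hU : Module.finrank K U = Module.finrank K F) (hy : ∀ u ∈ U, u ≠ 0 → lineForm y u ≠ 0) :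
    ∃ f : F →ₗ[K] F, ∀ u, u ∈ U ↔ f (lineForm y u) = u.1 := by
  let e : U ≃ₗ[K] F := LinearEquiv.ofInjectiveOfFinrankEq _ (injective_lineForm_domRestrict hy) hU
  have he (u : U) : e u = lineForm y u := rfl
  refine ⟨LinearMap.fst K F F ∘ₗ U.subtype ∘ₗ e.symm.toLinearMap,
    fun u => ⟨fun hu => ?_, fun hu => ?_⟩⟩
  · simp [← he ⟨u, hu⟩]
  · set v : U := e.symm (lineForm y u)
    have hfst : (v : F × F).1 = u.1 := hu
    have hline : lineForm y v = lineForm y u := (he v).symm.trans (e.apply_symm_apply _)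
    have hsnd : (v : F × F).2 = u.2 := by
      simpa [lineForm_apply, hfst] using hline
    exact Prod.ext hfst hsnd ▸ v.2

variable {f : F → F} (hf : ∀ u, u ∈ S ↔ f (lineForm y u) = u.1)
  (hy : ∀ u ∈ S, u ≠ 0 → lineForm y u ≠ 0)
include hf hy

theorem directions_eq_image_of_mem_iff :
    directions f = (fun u => u.1 / lineForm y u) '' (S \ {0}) := by
  ext d
  constructor
  · rintro ⟨a, ha, hd⟩
    have hline : lineForm y (f a, a + y * f a) = a := by simp [lineForm_apply]
    refine ⟨(f a, a + y * f a), ⟨(hf _).2 (by rw [hline]), fun h0 => ha ?_⟩, ?_⟩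
    · rw [← hline, Set.mem_singleton_iff.1 h0, map_zero]
    · change f a / lineForm y (f a, a + y * f a) = d
      rw [hline, hd, mul_div_cancel_right₀ d ha]
  · rintro ⟨u, ⟨hu, hu0⟩, rfl⟩
    exact ⟨lineForm y u, hy u hu hu0, by rw [(hf u).1 hu, div_mul_cancel₀ _ (hy u hu hu0)]⟩

theorem ncard_directions_lt_of_linSet_eq [Finite F] (h : linSet F S = linSet F T) (h0 : 0 ∈ T) :
    (directions f).ncard < T.ncard := by
  have hscale (c : F) (hc : c ≠ 0) (u : F × F) :
      (c • u).1 / lineForm y (c • u) = u.1 / lineForm y u := by simp [mul_div_mul_left _ _ hc]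
  calc (directions f).ncard
      ≤ ((fun u => u.1 / lineForm y u) '' (T \ {0})).ncard := by
        rw [directions_eq_image_of_mem_iff hf hy]
        exact Set.ncard_le_ncard (image_diff_zero_subset_of_linSet_eq h hscale)
    _ ≤ (T \ {0}).ncard := Set.ncard_image_le
    _ < T.ncard := Set.ncard_sdiff_singleton_lt_of_mem h0

end LinearSet

theorem eq_bot_of_forall_linSet_ne {F : Type} [Field F] [Finite F] {k : Subfield F}
    (U : Submodule k (F × F))
    (hU : ∀ m, m ∣ Module.finrank k F → 1 < m → ∀ E : Subfield F, Nat.card E = Nat.card k ^ m →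
      ∀ U' : Submodule E (F × F), linSet F (U' : Set (F × F)) ≠ linSet F (U : Set (F × F)))
    (E : IntermediateField k F) (hE : ∀ l ∈ E, ∀ u ∈ U, l • u ∈ U) : E = ⊥ := by
  by_contra hne
  have hdvd : Module.finrank k E ∣ Module.finrank k F :=
    ⟨_, (Module.finrank_mul_finrank k E F).symm⟩
  have hlt : 1 < Module.finrank k E :=
    lt_of_le_of_ne Module.finrank_pos fun h1 => hne (IntermediateField.finrank_eq_one_iff.1 h1.symm)
  have hcard : Nat.card E = Nat.card k ^ Module.finrank k E := Module.natCard_eq_pow_finrank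
  exact hU _ hdvd hlt E.toSubfield hcard { U with smul_mem' := fun l u hu => hE l l.2 u hu } rfl

theorem stmt_14_general {K : Type*} {F : Type} [Field K] [Field F] [Finite F] [Algebra K F]
    (U V : Submodule K (F × F)) (hU : Module.finrank K U = Module.finrank K F)
    (hmax : ∀ E : IntermediateField K F, (∀ l ∈ E, ∀ u ∈ U, l • u ∈ U) → E = ⊥)
    (hV : linSet F (V : Set (F × F)) = linSet F (U : Set (F × F))) :
    Module.finrank K V = Module.finrank K F := by
  have := Finite.of_injective (algebraMap K F) (algebraMap K F).injective
  have hcard : (U : Set (F × F)).ncard = Nat.card F :=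
    (Module.natCard_eq_pow_finrank (K := K) (V := U)).trans <| by
      rw [hU, ← Module.natCard_eq_pow_finrank]
  obtain ⟨y, hyU⟩ := exists_forall_lineForm_ne_zero U.zero_mem hcard.le
  have hyV := forall_lineForm_ne_zero_of_linSet_eq hV hyU
  have hle : Module.finrank K V ≤ Module.finrank K F :=
    LinearMap.finrank_le_finrank_of_injective (injective_lineForm_domRestrict hyV)
  refine hle.eq_of_not_lt fun hlt => ?_
  obtain ⟨f, hf⟩ := exists_linearMap_forall_mem_iff hU hyU
  have hD : (directions f).ncard < Nat.card K ^ (Module.finrank K F - 1) := calc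
    _ < (V : Set (F × F)).ncard := ncard_directions_lt_of_linSet_eq hf hyU hV.symm V.zero_mem
    _ = Nat.card K ^ Module.finrank K V := Module.natCard_eq_pow_finrank
    _ ≤ Nat.card K ^ (Module.finrank K F - 1) :=
      Nat.pow_le_pow_right Nat.card_pos (Nat.le_sub_one_of_lt hlt)
  obtain ⟨E, hE, hfE⟩ := exists_intermediateField_ne_bot_of_ncard_directions_lt f hD
  refine hE (hmax E fun l hl u hu => (hf _).2 ?_)
  rw [map_smul, smul_eq_mul, hfE l hl, (hf u).1 hu, Prod.smul_fst, smul_eq_mul]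

/-- if `U` is a rank-`n` `F_q`-subspace of `W = F_{q^n} × F_{q^n}` whose
linear set `L_U` has maximum field of linearity `F_q`, then the rank of `L_U` is uniquely
defined: every `F_q`-subspace `V` with `L_V = L_U` has `dim_{F_q} V = n`. -/
theorem stmt_14 (p e n q : ℕ) (hp : p.Prime) (he : 0 < e) (hn : 0 < n) (hq : q = p ^ e)
    (F : Type) [Field F] [Fintype F] (hF : Fintype.card F = q ^ n)
    (Fq : Subfield F) (hFq : Nat.card Fq = q)
    (U : Submodule Fq (F × F)) (hU : Module.finrank Fq U = n)
    (hmax : ∀ m : ℕ, m ∣ n → 1 < m → ∀ E : Subfield F, Nat.card E = q ^ m →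
      ∀ U' : Submodule E (F × F), linSet F (U' : Set (F × F)) ≠ linSet F (U : Set (F × F)))
    (V : Submodule Fq (F × F))
    (hV : linSet F (V : Set (F × F)) = linSet F (U : Set (F × F))) :
    Module.finrank Fq V = n := by
  subst hFq
  have hpow : Nat.card Fq ^ Module.finrank Fq F = Nat.card Fq ^ n := by
    rw [← Module.natCard_eq_pow_finrank, Nat.card_eq_fintype_card, hF]
  obtain rfl := (Nat.pow_right_inj Finite.one_lt_card).1 hpow
  exact stmt_14_general U V hU (eq_bot_of_forall_linSet_ne U hmax) hV
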